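/- For every real x ≥ 1 and every real ε with 0 < ε < 1, one has (1 − x^(−ε))^ε ≤ 1 − (ε/2)·x^(−ε). -/

import Mathlib

/-! Bernoulli's inequality with exponent in `[0, 1]`, i.e. concavity of `s ↦ (1 + s) ^ ε`, gives the
estimate already with `ε` in place of `ε / 2`. -/

theorem one_sub_rpow_le_one_sub_mul_self {t p : ℝ} (ht : t ≤ 1) (hp₀ : 0 ≤ p) (hp₁ : p ≤ 1) :
    (1 - t) ^ p ≤ 1 - p * t := by
  simpa only [mul_neg, ← sub_eq_add_neg] using
    rpow_one_add_le_one_add_mul_self (neg_le_neg ht) hp₀ hp₁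

/-- The key estimate in the recursion inequality of Lemma 6.2 of the paper. -/
theorem eflh_expconcave_estimate (x : ℝ) (hx : 1 ≤ x) (ε : ℝ) (hε : 0 < ε)
    (hε' : ε < 1) :
    (1 - x ^ (-ε)) ^ ε ≤ 1 - ε / 2 * x ^ (-ε) := by
  have rpow_nonneg : 0 ≤ x ^ (-ε) := Real.rpow_nonneg (zero_le_one.trans hx) _
  have rpow_le_one : x ^ (-ε) ≤ 1 :=
    Real.rpow_le_one_of_one_le_of_nonpos hx (neg_nonpos.mpr hε.le)
  calc
    (1 - x ^ (-ε)) ^ ε ≤ 1 - ε * x ^ (-ε) :=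
      one_sub_rpow_le_one_sub_mul_self rpow_le_one hε.le hε'.le
    _ ≤ 1 - ε / 2 * x ^ (-ε) :=
      sub_le_sub_left (mul_le_mul_of_nonneg_right (half_le_self hε.le) rpow_nonneg) 1
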